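/- Let q be a nonzero real number. There exists a conjugate-linear, involutive, anti-multiplicative map * on the ℂ-algebra GL_q(2,-2) with z11* = z22 τ, z12* = q^{-1} z21 τ, z21* = q τ z12, z22* = τ z11 and τ* = z11 z22 + q^{-1} z12 z21, turning GL_q(2,-2) into a *-algebra (denoted U_q(2,-2)); moreover the coaction α : U_q(2,-2) → U_q(2) ⊗ U_q(2,-2) given by α(z_{ij}) = Σ_k x_{ik} ⊗ z_{kj} and α(τ) = t ⊗ τ is a *-homomorphism, where U_q(2) is GL_q(2) with its standard *-structure and the star on the tensor product is (a ⊗ b)* = a* ⊗ b*. -/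

import Mathlib

open TensorProduct

/-- The five generators `x11, x12, x21, x22, t` of the algebra `GL_q(2)`. -/
inductive XGen : Type
  | x11 | x12 | x21 | x22 | t

def Xf (k : Type) [Field k] : XGen → FreeAlgebra k XGen := FreeAlgebra.ι k

/-- The defining relations of `GL_q(2)`. -/
inductive GLq2Rel (k : Type) [Field k] (q : k) :
    FreeAlgebra k XGen → FreeAlgebra k XGen → Prop
  | r1 : GLq2Rel k q (Xf k .x12 * Xf k .x11) (q • (Xf k .x11 * Xf k .x12))
  | r2 : GLq2Rel k q (Xf k .x21 * Xf k .x11) (q • (Xf k .x11 * Xf k .x21))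
  | r3 : GLq2Rel k q (Xf k .x22 * Xf k .x12) (q • (Xf k .x12 * Xf k .x22))
  | r4 : GLq2Rel k q (Xf k .x22 * Xf k .x21) (q • (Xf k .x21 * Xf k .x22))
  | r5 : GLq2Rel k q (Xf k .x12 * Xf k .x21) (Xf k .x21 * Xf k .x12)
  | r6 : GLq2Rel k q (Xf k .x11 * Xf k .x22 - Xf k .x22 * Xf k .x11)
      ((q⁻¹ - q) • (Xf k .x12 * Xf k .x21))
  | r7 : GLq2Rel k q (Xf k .x11 * Xf k .t) (Xf k .t * Xf k .x11)
  | r8 : GLq2Rel k q (Xf k .x22 * Xf k .t) (Xf k .t * Xf k .x22)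
  | r9 : GLq2Rel k q (Xf k .x12 * Xf k .t) (Xf k .t * Xf k .x12)
  | r10 : GLq2Rel k q (Xf k .x21 * Xf k .t) (Xf k .t * Xf k .x21)
  | r11 : GLq2Rel k q ((Xf k .x11 * Xf k .x22 - q⁻¹ • (Xf k .x12 * Xf k .x21)) * Xf k .t) 1

/-- The algebra `GL_q(2)`. -/
abbrev GLq2 (k : Type) [Field k] (q : k) := RingQuot (GLq2Rel k q)

/-- The five generators `z11, z12, z21, z22, τ` of the algebra `GL_q(2,-2)`. -/
inductive ZGen : Type
  | z11 | z12 | z21 | z22 | tau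

def Zf (k : Type) [Field k] : ZGen → FreeAlgebra k ZGen := FreeAlgebra.ι k

/-- The defining relations of `GL_q(2,-2)`. -/
inductive GLq22Rel (k : Type) [Field k] (q : k) :
    FreeAlgebra k ZGen → FreeAlgebra k ZGen → Prop
  | r1 : GLq22Rel k q (Zf k .z12 * Zf k .z11) (-(q • (Zf k .z11 * Zf k .z12)))
  | r2 : GLq22Rel k q (Zf k .z21 * Zf k .z11) (q • (Zf k .z11 * Zf k .z21))
  | r3 : GLq22Rel k q (Zf k .z22 * Zf k .z12) (q • (Zf k .z12 * Zf k .z22))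
  | r4 : GLq22Rel k q (Zf k .z22 * Zf k .z21) (-(q • (Zf k .z21 * Zf k .z22)))
  | r5 : GLq22Rel k q (Zf k .z12 * Zf k .z21) (-(Zf k .z21 * Zf k .z12))
  | r6 : GLq22Rel k q (Zf k .z11 * Zf k .z22 + Zf k .z22 * Zf k .z11)
      ((q - q⁻¹) • (Zf k .z12 * Zf k .z21))
  | r7 : GLq22Rel k q (Zf k .z11 * Zf k .tau) (-(Zf k .tau * Zf k .z11))
  | r8 : GLq22Rel k q (Zf k .z22 * Zf k .tau) (-(Zf k .tau * Zf k .z22))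
  | r9 : GLq22Rel k q (Zf k .z12 * Zf k .tau) (-(Zf k .tau * Zf k .z12))
  | r10 : GLq22Rel k q (Zf k .z21 * Zf k .tau) (-(Zf k .tau * Zf k .z21))
  | r11 : GLq22Rel k q ((Zf k .z11 * Zf k .z22 + q⁻¹ • (Zf k .z12 * Zf k .z21)) * Zf k .tau) 1

/-- The algebra `GL_q(2,-2)`. -/
abbrev GLq22 (k : Type) [Field k] (q : k) := RingQuot (GLq22Rel k q)

noncomputable section

/-- The generating matrix entries `x_{ij}` of `GL_q(2)`. -/
def xM (k : Type) [Field k] (q : k) : Fin 2 → Fin 2 → GLq2 k q :=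
  ![![RingQuot.mkAlgHom k (GLq2Rel k q) (Xf k .x11),
     RingQuot.mkAlgHom k (GLq2Rel k q) (Xf k .x12)],
    ![RingQuot.mkAlgHom k (GLq2Rel k q) (Xf k .x21),
     RingQuot.mkAlgHom k (GLq2Rel k q) (Xf k .x22)]]

/-- The element `t` of `GL_q(2)`. -/
def tE (k : Type) [Field k] (q : k) : GLq2 k q := RingQuot.mkAlgHom k (GLq2Rel k q) (Xf k .t)

/-- The generating matrix entries `z_{ij}` of `GL_q(2,-2)`. -/
def zM (k : Type) [Field k] (q : k) : Fin 2 → Fin 2 → GLq22 k q :=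
  ![![RingQuot.mkAlgHom k (GLq22Rel k q) (Zf k .z11),
     RingQuot.mkAlgHom k (GLq22Rel k q) (Zf k .z12)],
    ![RingQuot.mkAlgHom k (GLq22Rel k q) (Zf k .z21),
     RingQuot.mkAlgHom k (GLq22Rel k q) (Zf k .z22)]]

/-- The element `τ` of `GL_q(2,-2)`. -/
def tauE (k : Type) [Field k] (q : k) : GLq22 k q :=
  RingQuot.mkAlgHom k (GLq22Rel k q) (Zf k .tau)

set_option linter.unusedSimpArgs false
structure ZRel {B : Type*} [Ring B] [Algebra ℂ B] (q : ℂ) (a b c d t : B) : Prop where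
  r1 : b * a = -(q • (a * b))
  r2 : c * a = q • (a * c)
  r3 : d * b = q • (b * d)
  r4 : d * c = -(q • (c * d))
  r5 : b * c = -(c * b)
  r6 : a * d + d * a = (q - q⁻¹) • (b * c)
  r7 : a * t = -(t * a)
  r8 : d * t = -(t * d)
  r9 : b * t = -(t * b)
  r10 : c * t = -(t * c)
  r11 : (a * d + q⁻¹ • (b * c)) * t = 1

theorem ZRel.anti {B : Type*} [Ring B] {t D z : B} (h : z * t = -(t * z)) (h1 : D * t = 1) (h2 : t * D = 1) :
    D * z = -(z * D) := by
  calc D * z = D * (z * t) * D := by rw [mul_assoc, mul_assoc, h2, mul_one]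
    _ = -((D * t) * z * D) := by rw [h]; noncomm_ring
    _ = _ := by rw [h1, one_mul]

theorem ZRel.comm {B : Type*} [Ring B] [Algebra ℂ B] {q : ℂ} {a b c d t : B} (h : ZRel q a b c d t) :
    t * (a * d + q⁻¹ • (b * c)) = 1 := by
  rw [← h.r11]
  have e : ∀ x y : B, x * t = -(t * x) → y * t = -(t * y) → x * y * t = t * (x * y) := by
    intro x y hx hy
    rw [mul_assoc, hy, mul_neg, ← mul_assoc, hx, neg_mul, neg_neg, mul_assoc]
  rw [add_mul, mul_add, smul_mul_assoc, e _ _ h.r7 h.r8, e _ _ h.r9 h.r10, mul_smul_comm]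

theorem ZRel.star {B : Type*} [Ring B] [Algebra ℂ B] {q : ℂ} (hq : q ≠ 0) {a b c d t : B}
    (h : ZRel q a b c d t) :
    ZRel (B := Bᵐᵒᵖ) q (.op (d * t)) (.op (q⁻¹ • (c * t))) (.op (q • (t * b))) (.op (t * a))
      (.op (a * d + q⁻¹ • (b * c))) := by
  have hc := h.comm
  have h1 := ZRel.anti h.r7 h.r11 hc
  have h2 := ZRel.anti h.r8 h.r11 hc
  have h3 := ZRel.anti h.r9 h.r11 hc
  have h4 := ZRel.anti h.r10 h.r11 hc
  have h11 := h.r11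
  set D := a * d + q⁻¹ • (b * c) with hD
  have h1' : a * D = -(D * a) := by rw [h1, neg_neg]
  have h3' : b * D = -(D * b) := by rw [h3, neg_neg]
  have hDD : t * a * (d * t) + q⁻¹ • ((q • (t * b)) * (q⁻¹ • (c * t))) = t := by
    trans t * (D * t)
    · rw [hD]
      simp only [mul_add, add_mul, mul_smul_comm, smul_mul_assoc, mul_assoc, smul_smul]
      match_scalars <;> field_simp
    · rw [h11, mul_one]
  have r6' : d * a = (q - q⁻¹) • (b * c) - a * d := by rw [← h.r6]; abel
  have asc : ∀ {x y z : B}, x * y = z → ∀ w, x * (y * w) = z * w := by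
    intro x y z h w; rw [← h, mul_assoc]
  constructor
  case r11 =>
    apply MulOpposite.unop_injective
    simp only [MulOpposite.unop_mul, MulOpposite.unop_add, MulOpposite.unop_op, MulOpposite.unop_smul, MulOpposite.unop_one]
    rw [hDD, h11]
  case r7 | r8 | r9 | r10 =>
    apply MulOpposite.unop_injective
    simp only [MulOpposite.unop_mul, MulOpposite.unop_neg, MulOpposite.unop_op,
      mul_smul_comm, smul_mul_assoc, mul_assoc, hc, h11, asc hc, asc h11, h1', h3', asc h2, asc h4,
      neg_mul, mul_neg, mul_one, one_mul, smul_neg, neg_neg]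
  all_goals
    apply MulOpposite.unop_injective
    have r5' : b * c = -(c * b) := h.r5
    simp only [MulOpposite.unop_mul, MulOpposite.unop_neg, MulOpposite.unop_op, MulOpposite.unop_add, MulOpposite.unop_smul,
      mul_smul_comm, smul_mul_assoc, mul_assoc, h.r1, h.r2, h.r3, h.r4, h.r5, r6', h.r7, h.r8, h.r9, h.r10,
      asc h.r1, asc h.r2, asc h.r3, asc h.r4, asc h.r5, asc r6', asc h.r7, asc h.r8, asc h.r9, asc h.r10, 
      neg_mul, mul_neg, smul_neg, neg_neg, sub_mul, mul_sub, smul_smul]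
    try (match_scalars <;> field_simp)
    try ring

/-- The opposite ring with the conjugate scalar action. -/
def CO (B : Type*) := Bᵐᵒᵖ

instance {B : Type*} [Ring B] : Ring (CO B) := inferInstanceAs (Ring Bᵐᵒᵖ)

instance {B : Type*} [Ring B] [Algebra ℂ B] : Algebra ℂ (CO B) :=
  Algebra.compHom Bᵐᵒᵖ (starRingEnd ℂ)

def CO.mk {B : Type*} (b : B) : CO B := MulOpposite.op b
def CO.un {B : Type*} (b : CO B) : B := MulOpposite.unop b

theorem CO.un_add {B : Type*} [Ring B] (x y : CO B) : (x + y).un = x.un + y.un := rfl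
theorem CO.un_mul {B : Type*} [Ring B] (x y : CO B) : (x * y).un = y.un * x.un := rfl
theorem CO.un_smul {B : Type*} [Ring B] [Algebra ℂ B] (c : ℂ) (x : CO B) :
    (c • x).un = (starRingEnd ℂ) c • x.un := rfl

theorem ZRel.toCO {B : Type*} [Ring B] [Algebra ℂ B] {q : ℝ} {a b c d t : B}
    (h : ZRel (B := Bᵐᵒᵖ) (q : ℂ) (.op a) (.op b) (.op c) (.op d) (.op t)) :
    ZRel (B := CO B) (q : ℂ) (CO.mk a) (CO.mk b) (CO.mk c) (CO.mk d) (CO.mk t) := by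
  have e : ∀ x : CO B, (q : ℂ) • x = ((q : ℂ) • (show Bᵐᵒᵖ from x) : Bᵐᵒᵖ) := by
    intro x
    change ((starRingEnd ℂ) (q : ℂ) • (show Bᵐᵒᵖ from x) : Bᵐᵒᵖ) = _
    rw [Complex.conj_ofReal]
  have e2 : ∀ x : CO B, (q : ℂ)⁻¹ • x = ((q : ℂ)⁻¹ • (show Bᵐᵒᵖ from x) : Bᵐᵒᵖ) := by
    intro x
    change ((starRingEnd ℂ) (q : ℂ)⁻¹ • (show Bᵐᵒᵖ from x) : Bᵐᵒᵖ) = _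
    rw [map_inv₀, Complex.conj_ofReal]
  have e3 : ∀ x : CO B, ((q : ℂ) - (q : ℂ)⁻¹) • x
      = (((q : ℂ) - (q : ℂ)⁻¹) • (show Bᵐᵒᵖ from x) : Bᵐᵒᵖ) := by
    intro x
    change ((starRingEnd ℂ) ((q : ℂ) - (q : ℂ)⁻¹) • (show Bᵐᵒᵖ from x) : Bᵐᵒᵖ) = _
    rw [map_sub, map_inv₀, Complex.conj_ofReal]
  constructor
  · rw [e]; exact h.r1
  · rw [e]; exact h.r2
  · rw [e]; exact h.r3
  · rw [e]; exact h.r4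
  · exact h.r5
  · rw [e3]; exact h.r6
  · exact h.r7
  · exact h.r8
  · exact h.r9
  · exact h.r10
  · rw [e2]; exact h.r11

def zfun {B : Type*} (a b c d t : B) : ZGen → B
  | .z11 => a
  | .z12 => b
  | .z21 => c
  | .z22 => d
  | .tau => t

theorem ZRel.lift {B : Type*} [Ring B] [Algebra ℂ B] {q : ℂ} {a b c d t : B}
    (h : ZRel q a b c d t) : ∃ f : GLq22 ℂ q →ₐ[ℂ] B,
      f (zM ℂ q 0 0) = a ∧ f (zM ℂ q 0 1) = b ∧ f (zM ℂ q 1 0) = c ∧ f (zM ℂ q 1 1) = d ∧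
      f (tauE ℂ q) = t := by
  have w : ∀ ⦃x y⦄, GLq22Rel ℂ q x y →
      FreeAlgebra.lift ℂ (zfun a b c d t) x = FreeAlgebra.lift ℂ (zfun a b c d t) y := by
    intro x y hxy
    have h1 := h.r1
    have h2 := h.r2
    have h3 := h.r3
    have h4 := h.r4
    have h5 := h.r5
    have h6 := h.r6
    have h7 := h.r7
    have h8 := h.r8
    have h9 := h.r9
    have h10 := h.r10
    have h11 := h.r11
    cases hxy <;>
    simp only [Zf, map_mul, map_add, map_neg, map_smul, map_one, FreeAlgebra.lift_ι_apply, zfun] <;>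
    assumption
  refine ⟨RingQuot.liftAlgHom ℂ ⟨_, w⟩, ?_, ?_, ?_, ?_, ?_⟩ <;>
  simp [zM, tauE, Zf, RingQuot.liftAlgHom_mkAlgHom_apply, zfun]

theorem zrel_gen (q : ℂ) : ZRel q (zM ℂ q 0 0) (zM ℂ q 0 1) (zM ℂ q 1 0) (zM ℂ q 1 1) (tauE ℂ q) := by
  constructor
  · simpa [zM, tauE] using RingQuot.mkAlgHom_rel ℂ (GLq22Rel.r1 (k := ℂ) (q := q))
  · simpa [zM, tauE] using RingQuot.mkAlgHom_rel ℂ (GLq22Rel.r2 (k := ℂ) (q := q))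
  · simpa [zM, tauE] using RingQuot.mkAlgHom_rel ℂ (GLq22Rel.r3 (k := ℂ) (q := q))
  · simpa [zM, tauE] using RingQuot.mkAlgHom_rel ℂ (GLq22Rel.r4 (k := ℂ) (q := q))
  · simpa [zM, tauE] using RingQuot.mkAlgHom_rel ℂ (GLq22Rel.r5 (k := ℂ) (q := q))
  · simpa only [map_mul, map_add, map_smul, zM, tauE, Matrix.cons_val] using RingQuot.mkAlgHom_rel ℂ (GLq22Rel.r6 (k := ℂ) (q := q))
  · simpa [zM, tauE] using RingQuot.mkAlgHom_rel ℂ (GLq22Rel.r7 (k := ℂ) (q := q))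
  · simpa [zM, tauE] using RingQuot.mkAlgHom_rel ℂ (GLq22Rel.r8 (k := ℂ) (q := q))
  · simpa [zM, tauE] using RingQuot.mkAlgHom_rel ℂ (GLq22Rel.r9 (k := ℂ) (q := q))
  · simpa [zM, tauE] using RingQuot.mkAlgHom_rel ℂ (GLq22Rel.r10 (k := ℂ) (q := q))
  · simpa only [map_mul, map_add, map_smul, map_one, zM, tauE, Matrix.cons_val] using RingQuot.mkAlgHom_rel ℂ (GLq22Rel.r11 (k := ℂ) (q := q))

theorem xt_comm (q : ℂ) (i j : Fin 2) : xM ℂ q i j * tE ℂ q = tE ℂ q * xM ℂ q i j := by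
  fin_cases i <;> fin_cases j
  · simpa [xM, tE] using RingQuot.mkAlgHom_rel ℂ (GLq2Rel.r7 (k := ℂ) (q := q))
  · simpa [xM, tE] using RingQuot.mkAlgHom_rel ℂ (GLq2Rel.r9 (k := ℂ) (q := q))
  · simpa [xM, tE] using RingQuot.mkAlgHom_rel ℂ (GLq2Rel.r10 (k := ℂ) (q := q))
  · simpa [xM, tE] using RingQuot.mkAlgHom_rel ℂ (GLq2Rel.r8 (k := ℂ) (q := q))

theorem xt_inv (q : ℂ) : (xM ℂ q 0 0 * xM ℂ q 1 1 - q⁻¹ • (xM ℂ q 0 1 * xM ℂ q 1 0)) * tE ℂ q = 1 := by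
  simpa only [map_mul, map_sub, map_smul, map_one, xM, tE, Matrix.cons_val] using
    RingQuot.mkAlgHom_rel ℂ (GLq2Rel.r11 (k := ℂ) (q := q))

theorem GLq22_ind (q : ℂ) {P : GLq22 ℂ q → Prop}
    (hadd : ∀ x y, P x → P y → P (x + y)) (hmul : ∀ x y, P x → P y → P (x * y))
    (hc : ∀ c : ℂ, P (c • 1))
    (h11 : P (zM ℂ q 0 0)) (h12 : P (zM ℂ q 0 1)) (h21 : P (zM ℂ q 1 0)) (h22 : P (zM ℂ q 1 1))
    (ht : P (tauE ℂ q)) (x : GLq22 ℂ q) : P x := by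
  obtain ⟨y, rfl⟩ := RingQuot.mkAlgHom_surjective ℂ (GLq22Rel ℂ q) x
  induction y using FreeAlgebra.induction with
  | grade0 r => rw [AlgHom.commutes, Algebra.algebraMap_eq_smul_one]; exact hc r
  | grade1 x => cases x <;> assumption
  | mul a b ha hb => rw [map_mul]; exact hmul _ _ ha hb
  | add a b ha hb => rw [map_add]; exact hadd _ _ ha hb

/-- Let `q` be a nonzero real number.  There is a conjugate-linear, involutive,
anti-multiplicative star on `GL_q(2,-2)` with `z11* = z22 τ`,
`z12* = q⁻¹ z21 τ`, `z21* = q τ z12`, `z22* = τ z11` and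
`τ* = z11 z22 + q⁻¹ z12 z21` (the *-algebra `U_q(2,-2)`); moreover the coaction
`α : U_q(2,-2) → U_q(2) ⊗ U_q(2,-2)` is a *-homomorphism, where `U_q(2)` is
`GL_q(2)` with its standard *-structure `sA` and the star on the tensor product
is `(a ⊗ b)* = a* ⊗ b*`. -/
theorem Uq22_star_structure (q : ℝ) (hq : q ≠ 0)
    -- the standard *-structure of `U_q(2)`
    (sA : GLq2 ℂ (q : ℂ) → GLq2 ℂ (q : ℂ))
    (hsAadd : ∀ x y, sA (x + y) = sA x + sA y)
    (hsAsmul : ∀ (c : ℂ) x, sA (c • x) = (starRingEnd ℂ) c • sA x)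
    (hsAinv : ∀ x, sA (sA x) = x)
    (hsAmul : ∀ x y, sA (x * y) = sA y * sA x)
    (hsA11 : sA (xM ℂ (q : ℂ) 0 0) = xM ℂ (q : ℂ) 1 1 * tE ℂ (q : ℂ))
    (hsA12 : sA (xM ℂ (q : ℂ) 0 1) = -((q : ℂ)⁻¹ • (xM ℂ (q : ℂ) 1 0 * tE ℂ (q : ℂ))))
    (hsA21 : sA (xM ℂ (q : ℂ) 1 0) = -((q : ℂ) • (xM ℂ (q : ℂ) 0 1 * tE ℂ (q : ℂ))))
    (hsA22 : sA (xM ℂ (q : ℂ) 1 1) = xM ℂ (q : ℂ) 0 0 * tE ℂ (q : ℂ))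
    (hsAt : sA (tE ℂ (q : ℂ)) =
      xM ℂ (q : ℂ) 0 0 * xM ℂ (q : ℂ) 1 1 - (q : ℂ)⁻¹ • (xM ℂ (q : ℂ) 0 1 * xM ℂ (q : ℂ) 1 0))
    -- the coaction
    (α : GLq22 ℂ (q : ℂ) →ₐ[ℂ] GLq2 ℂ (q : ℂ) ⊗[ℂ] GLq22 ℂ (q : ℂ))
    (hα : ∀ i j : Fin 2,
      α (zM ℂ (q : ℂ) i j) = ∑ l : Fin 2, xM ℂ (q : ℂ) i l ⊗ₜ[ℂ] zM ℂ (q : ℂ) l j)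
    (hατ : α (tauE ℂ (q : ℂ)) = tE ℂ (q : ℂ) ⊗ₜ[ℂ] tauE ℂ (q : ℂ)) :
    ∃ sZ : GLq22 ℂ (q : ℂ) → GLq22 ℂ (q : ℂ),
      (∀ x y, sZ (x + y) = sZ x + sZ y) ∧
      (∀ (c : ℂ) x, sZ (c • x) = (starRingEnd ℂ) c • sZ x) ∧
      (∀ x, sZ (sZ x) = x) ∧
      (∀ x y, sZ (x * y) = sZ y * sZ x) ∧
      sZ (zM ℂ (q : ℂ) 0 0) = zM ℂ (q : ℂ) 1 1 * tauE ℂ (q : ℂ) ∧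
      sZ (zM ℂ (q : ℂ) 0 1) = (q : ℂ)⁻¹ • (zM ℂ (q : ℂ) 1 0 * tauE ℂ (q : ℂ)) ∧
      sZ (zM ℂ (q : ℂ) 1 0) = (q : ℂ) • (tauE ℂ (q : ℂ) * zM ℂ (q : ℂ) 0 1) ∧
      sZ (zM ℂ (q : ℂ) 1 1) = tauE ℂ (q : ℂ) * zM ℂ (q : ℂ) 0 0 ∧
      sZ (tauE ℂ (q : ℂ)) =
        zM ℂ (q : ℂ) 0 0 * zM ℂ (q : ℂ) 1 1 + (q : ℂ)⁻¹ • (zM ℂ (q : ℂ) 0 1 * zM ℂ (q : ℂ) 1 0) ∧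
      -- the coaction `α` is a *-homomorphism
      ∃ S : GLq2 ℂ (q : ℂ) ⊗[ℂ] GLq22 ℂ (q : ℂ) → GLq2 ℂ (q : ℂ) ⊗[ℂ] GLq22 ℂ (q : ℂ),
        (∀ u v, S (u + v) = S u + S v) ∧
        (∀ (a : GLq2 ℂ (q : ℂ)) (z : GLq22 ℂ (q : ℂ)), S (a ⊗ₜ[ℂ] z) = sA a ⊗ₜ[ℂ] sZ z) ∧
        ∀ x, α (sZ x) = S (α x) := by
  have hqc : (q : ℂ) ≠ 0 := by exact_mod_cast hq
  have Z := zrel_gen (q : ℂ)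
  have hx := xt_comm (q : ℂ)
  have hx11 := xt_inv (q : ℂ)
  have Zc := Z.comm
  obtain ⟨f, f11, f12, f21, f22, ft⟩ := (Z.star hqc).toCO.lift
  generalize hz11 : zM ℂ (q : ℂ) 0 0 = a at *
  generalize hz12 : zM ℂ (q : ℂ) 0 1 = b at *
  generalize hz21 : zM ℂ (q : ℂ) 1 0 = c at *
  generalize hz22 : zM ℂ (q : ℂ) 1 1 = d at *
  generalize hzt : tauE ℂ (q : ℂ) = t at *
  obtain ⟨s, hs⟩ : ∃ s : GLq22 ℂ (q : ℂ) → GLq22 ℂ (q : ℂ), ∀ x, s x = (f x).un := ⟨_, fun _ => rfl⟩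
  have sadd : ∀ x y, s (x + y) = s x + s y := by
    intro x y; rw [hs, hs, hs, map_add, CO.un_add]
  have ssmul : ∀ (c : ℂ) x, s (c • x) = (starRingEnd ℂ) c • s x := by
    intro c x; rw [hs, hs, map_smul, CO.un_smul]
  have smul : ∀ x y, s (x * y) = s y * s x := by
    intro x y; rw [hs, hs, hs, map_mul, CO.un_mul]
  have s1 : s 1 = 1 := by rw [hs, map_one]; rfl
  have s11 : s a = d * t := by rw [hs, f11]; rfl
  have s12 : s b = (q : ℂ)⁻¹ • (c * t) := by rw [hs, f12]; rfl
  have s21 : s c = (q : ℂ) • (t * b) := by rw [hs, f21]; rfl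
  have s22 : s d = t * a := by rw [hs, f22]; rfl
  have st : s t = a * d + (q : ℂ)⁻¹ • (b * c) := by rw [hs, ft]; rfl
  clear hs f11 f12 f21 f22 ft f
  have cq : (starRingEnd ℂ) (q : ℂ) = q := Complex.conj_ofReal q
  have cq' : (starRingEnd ℂ) (q : ℂ)⁻¹ = (q : ℂ)⁻¹ := by rw [map_inv₀, cq]
  have Z11 := Z.r11
  have sinv : ∀ x, s (s x) = x := by
    intro x
    induction x using GLq22_ind with
    | hadd x y hx hy => rw [sadd, sadd, hx, hy]
    | hmul x y hx hy => rw [smul, smul, hx, hy]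
    | hc c => rw [ssmul, ssmul, s1, s1, Complex.conj_conj]
    | h11 => rw [hz11, s11, smul, st, s22, ← mul_assoc, Z11, one_mul]
    | h12 => rw [hz12, s12, ssmul, smul, st, s21, cq', mul_smul_comm, smul_smul,
        inv_mul_cancel₀ hqc, one_smul, ← mul_assoc, Z11, one_mul]
    | h21 => rw [hz21, s21, ssmul, smul, st, s12, cq, smul_mul_assoc, smul_smul,
        mul_inv_cancel₀ hqc, one_smul, mul_assoc, Zc, mul_one]
    | h22 => rw [hz22, s22, smul, st, s11, mul_assoc, Zc, mul_one]
    | ht =>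
      rw [hzt, st, sadd, ssmul, smul, smul, s11, s12, s21, s22, cq', smul_mul_assoc, mul_smul_comm,
        smul_smul, smul_smul, inv_mul_cancel₀ hqc, one_mul]
      calc _ = t * ((a * d + (q : ℂ)⁻¹ • (b * c)) * t) := by
            rw [add_mul, mul_add, smul_mul_assoc, mul_smul_comm]; simp only [mul_assoc]
        _ = t := by rw [Z11, mul_one]
  have sA1 : sA 1 = 1 := by
    have h := hsAmul 1 (sA 1)
    rw [one_mul, hsAinv, one_mul] at h
    exact h.symm
  refine ⟨s, sadd, ssmul, sinv, smul, s11, s12, s21, s22, st, ?_⟩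
  let A' : GLq2 ℂ (q : ℂ) →ₛₗ[starRingEnd ℂ] GLq2 ℂ (q : ℂ) :=
    { toFun := sA, map_add' := hsAadd, map_smul' := hsAsmul }
  let Z' : GLq22 ℂ (q : ℂ) →ₛₗ[starRingEnd ℂ] GLq22 ℂ (q : ℂ) :=
    { toFun := s, map_add' := sadd, map_smul' := ssmul }
  obtain ⟨S, Stm⟩ : ∃ S : GLq2 ℂ (q : ℂ) ⊗[ℂ] GLq22 ℂ (q : ℂ) →ₛₗ[starRingEnd ℂ]
      GLq2 ℂ (q : ℂ) ⊗[ℂ] GLq22 ℂ (q : ℂ), ∀ x z, S (x ⊗ₜ[ℂ] z) = sA x ⊗ₜ[ℂ] s z :=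
    ⟨TensorProduct.map A' Z', fun x z => TensorProduct.map_tmul A' Z' x z⟩
  have Smul : ∀ u v, S (u * v) = S v * S u := by
    intro u v
    induction u using TensorProduct.induction_on with
    | zero => rw [zero_mul, map_zero, mul_zero]
    | add x y hx hy => rw [add_mul, map_add, map_add, hx, hy, mul_add]
    | tmul x z =>
      induction v using TensorProduct.induction_on with
      | zero => rw [mul_zero, map_zero, zero_mul]
      | add x y hx hy => rw [mul_add, map_add, map_add, hx, hy, add_mul]
      | tmul x' z' =>
        rw [Algebra.TensorProduct.tmul_mul_tmul, Stm, Stm, Stm,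
          Algebra.TensorProduct.tmul_mul_tmul, hsAmul, smul]
  have S1 : S 1 = 1 := by rw [Algebra.TensorProduct.one_def, Stm, sA1, s1]
  have a11 := hα 0 0
  have a12 := hα 0 1
  have a21 := hα 1 0
  have a22 := hα 1 1
  simp only [Fin.sum_univ_two, hz11, hz12, hz21, hz22] at a11 a12 a21 a22
  have x11 := hx 0 0
  have x12 := hx 0 1
  have x21 := hx 1 0
  have x22 := hx 1 1
  clear hα hx
  generalize xM ℂ (q : ℂ) 0 0 = xa at *
  generalize xM ℂ (q : ℂ) 0 1 = xb at *
  generalize xM ℂ (q : ℂ) 1 0 = xc at *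
  generalize xM ℂ (q : ℂ) 1 1 = xd at *
  generalize tE ℂ (q : ℂ) = xt at *
  refine ⟨S, map_add S, Stm, ?_⟩
  have Z7' : a * t = (-1 : ℂ) • (t * a) := Z.r7.trans (neg_one_smul ℂ _).symm
  have Z9' : b * t = (-1 : ℂ) • (t * b) := Z.r9.trans (neg_one_smul ℂ _).symm
  have hsA12' : sA xb = (-(q : ℂ)⁻¹) • (xc * xt) := by
    rw [hsA12]; exact (neg_smul (q : ℂ)⁻¹ (xc * xt)).symm
  have e11 : α (s a) = S (α a) := by
    rw [s11, map_mul, a22, hατ, a11, map_add, Stm, Stm, hsA11, hsA12', s11, s21, add_mul,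
      Algebra.TensorProduct.tmul_mul_tmul, Algebra.TensorProduct.tmul_mul_tmul, Z9']
    simp only [← TensorProduct.smul_tmul', TensorProduct.tmul_smul, smul_smul]
    match_scalars <;> field_simp
  have e12 : α (s b) = S (α b) := by
    rw [s12, map_smul, map_mul, a21, hατ, a12, map_add, Stm, Stm, hsA11, hsA12', s12, s22, add_mul,
      Algebra.TensorProduct.tmul_mul_tmul, Algebra.TensorProduct.tmul_mul_tmul, Z7']
    simp only [← TensorProduct.smul_tmul', TensorProduct.tmul_smul, smul_smul]
    match_scalars <;> field_simp
  have e21 : α (s c) = S (α c) := by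
    rw [s21, map_smul, map_mul, a12, hατ, a21, map_add, Stm, Stm, hsA21, hsA22, s11, s21, mul_add,
      Algebra.TensorProduct.tmul_mul_tmul, Algebra.TensorProduct.tmul_mul_tmul, Z.r8, x11, x12]
    simp only [TensorProduct.neg_tmul, TensorProduct.tmul_neg, ← TensorProduct.smul_tmul',
      TensorProduct.tmul_smul, smul_smul]
    match_scalars <;> field_simp
  have e22 : α (s d) = S (α d) := by
    rw [s22, map_mul, a11, hατ, a22, map_add, Stm, Stm, hsA21, hsA22, s12, s22, mul_add,
      Algebra.TensorProduct.tmul_mul_tmul, Algebra.TensorProduct.tmul_mul_tmul, Z.r10, x11, x12]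
    simp only [TensorProduct.neg_tmul, TensorProduct.tmul_neg, ← TensorProduct.smul_tmul',
      TensorProduct.tmul_smul, smul_smul]
    match_scalars <;> field_simp
  have et : α (s t) = S (α t) := by
    have k1 : S (α t) * α t = 1 := by
      rw [hατ, Stm, Algebra.TensorProduct.tmul_mul_tmul, hsAt, st, hx11, Z11,
        Algebra.TensorProduct.one_def]
    have k2 : α t * α (s t) = 1 := by rw [← map_mul, st, Zc, map_one]
    rw [← one_mul (α (s t)), ← k1, mul_assoc, k2, mul_one]
  intro x
  induction x using GLq22_ind with
  | hadd x y hx hy => rw [sadd, map_add, map_add, map_add, hx, hy]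
  | hmul x y hx hy => rw [smul, map_mul, map_mul, Smul, hx, hy]
  | hc c => rw [ssmul, s1, map_smul, map_smul, map_one, map_smulₛₗ, S1]
  | h11 => rw [hz11, e11]
  | h12 => rw [hz12, e12]
  | h21 => rw [hz21, e21]
  | h22 => rw [hz22, e22]
  | ht => rw [hzt, et]

end
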